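/- Let U ⊆ ℝⁿ be open, g : U → ℝ^{n×n} smooth symmetric invertible, V : U → ℝ smooth, m = 1 (write λ^i for λ_1^i). Let λ : U → ℝⁿ be a smooth nowhere-zero solution of the λ-equations ∂(g_{1i}λ^i)/∂x^k − 2[k1,i]λ^i = 0, and let y : U → Ω ⊆ ℝⁿ be a diffeomorphism straightening λ, i.e. λ^i(x) ∂y^j/∂x^i = δ_1^j for all x ∈ U and all j. Assume the slice Σ = {y¹ = 0} is nonempty and Ω = I × Σ' for an interval I ∋ 0. Then for any smooth symmetric matrix-valued initial data Ĝ⁰ and any smooth scalar initial data V̂⁰ prescribed on Σ, there exists a unique smooth symmetric ĝ : U → ℝ^{n×n} and a unique smooth V̂ : U → ℝ solving the ĝ-equations λ^ℓ ∂ĝ_{ij}/∂x^ℓ + (∂λ^ℓ/∂x^i)ĝ_{ℓj} + (∂λ^ℓ/∂x^j)ĝ_{ℓi} = ∂g_{ij}/∂x¹ (all i,j) and the V̂-equation λ^j ∂V̂/∂x^j = ∂V/∂x¹ on U, whose representatives in the y-coordinates restrict to Ĝ⁰ and V̂⁰ on Σ. -/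

import Mathlib

/-- Partial derivative in the `k`-th coordinate direction. -/
noncomputable def pd {n : ℕ} (k : Fin n) (f : (Fin n → ℝ) → ℝ) (x : Fin n → ℝ) : ℝ :=
  fderiv ℝ f x (Pi.single k 1)

/-- Christoffel symbol of the first kind `[ij,k]` of the matrix-valued map `g`. -/
noncomputable def chr {n : ℕ} (g : (Fin n → ℝ) → Matrix (Fin n) (Fin n) ℝ)
    (i j k : Fin n) (x : Fin n → ℝ) : ℝ :=
  (1/2) * (pd i (fun y => g y j k) x + pd j (fun y => g y i k) x - pd k (fun y => g y i j) x)

/-!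
In the `y`-coordinates the field `λ` is `∂/∂y¹`, and the left-hand side of the `ĝ`-equations is the
Lie derivative of `ĝ` along `λ`. Since Lie derivatives commute with pullback, the equations become
`∂Ĝ_{ij}/∂y¹ = (the representative of ∂g/∂x¹)_{ij}` and `∂V̂/∂y¹ = ∂V/∂x¹`, which decouple over the
entries and are solved uniquely by integrating along `y¹` from the slice `y¹ = 0`.
-/

open Set Filter Topology MeasureTheory
open scoped ContDiff Matrix

theorem continuousOn_comp_prodMk_left {X Y Z : Type*} [TopologicalSpace X] [TopologicalSpace Y]
    [TopologicalSpace Z] {f : X × Y → Z} {W : Set (X × Y)} {t : Set Y} {x : X}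
    (hf : ContinuousOn f W) (hx : ∀ y ∈ t, (x, y) ∈ W) : ContinuousOn (fun y ↦ f (x, y)) t :=
  hf.comp (by fun_prop) hx

theorem differentiableAt_of_contDiffOn_infty {E F : Type*} [NormedAddCommGroup E]
    [NormedSpace ℝ E] [NormedAddCommGroup F] [NormedSpace ℝ F] {f : E → F} {U : Set E} {x : E}
    (hU : IsOpen U) (hf : ContDiffOn ℝ ∞ f U) (hx : x ∈ U) : DifferentiableAt ℝ f x :=
  (hf.contDiffAt (hU.mem_nhds hx)).differentiableAt (by simp)

section ParametricIntegral

variable {H E : Type*} [NormedAddCommGroup H] [NormedSpace ℝ H]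
  [NormedAddCommGroup E] [NormedSpace ℝ E] {a b : ℝ} {W : Set (H × ℝ)} {f : H × ℝ → E}

theorem hasFDerivAt_intervalIntegral_of_contDiffOn {q : H} (hW : IsOpen W)
    (hf : ContDiffOn ℝ 1 f W) (hq : ∀ s ∈ uIcc a b, (q, s) ∈ W) :
    HasFDerivAt (fun p ↦ ∫ s in a..b, f (p, s))
      (∫ s in a..b, fderiv ℝ f (q, s) ∘L .inl ℝ H ℝ) q := by
  have hf' : ContinuousOn (fun z ↦ fderiv ℝ f z ∘L .inl ℝ H ℝ) W :=
    (hf.continuousOn_fderiv_of_isOpen hW le_rfl).clm_comp continuousOn_const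
  obtain ⟨C, hC⟩ := isCompact_uIcc.exists_bound_of_continuousOn
    (continuousOn_comp_prodMk_left hf' hq)
  have near : ∀ᶠ p in 𝓝 q, ∀ s ∈ uIcc a b,
      (p, s) ∈ W ∧ ‖fderiv ℝ f (p, s) ∘L .inl ℝ H ℝ‖ < C + 1 := by
    refine isCompact_uIcc.eventually_forall_of_forall_eventually fun s hs ↦ ?_
    have hWs := hW.mem_nhds (hq s hs)
    exact Filter.Eventually.and hWs
      ((hf'.continuousAt hWs).norm.eventually_lt_const ((hC s hs).trans_lt (lt_add_one C)))
  refine intervalIntegral.hasFDerivAt_integral_of_dominated_of_fderiv_le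
    (F := fun p s ↦ f (p, s)) (F' := fun p s ↦ fderiv ℝ f (p, s) ∘L .inl ℝ H ℝ)
    (bound := fun _ ↦ C + 1) near ?_ ?_ ?_ ?_ (by simp) ?_
  · filter_upwards [near] with p hp
    exact (continuousOn_comp_prodMk_left hf.continuousOn fun s hs ↦ (hp s hs).1).intervalIntegrable
      |>.aestronglyMeasurable_restrict_uIoc
  · exact (continuousOn_comp_prodMk_left hf.continuousOn hq).intervalIntegrable
  · exact (continuousOn_comp_prodMk_left hf' hq).intervalIntegrable
      |>.aestronglyMeasurable_restrict_uIoc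
  · exact .of_forall fun s hs p hp ↦ (hp s (uIoc_subset_uIcc hs)).2.le
  · refine .of_forall fun s hs p hp ↦ ?_
    have hps := hW.mem_nhds (hp s (uIoc_subset_uIcc hs)).1
    exact ((hf.contDiffAt hps).differentiableAt one_ne_zero).hasFDerivAt.comp p
      (hasFDerivAt_prodMk_left p s)

theorem contDiffOn_intervalIntegral [FiniteDimensional ℝ H] {O : Set H} (hO : IsOpen O)
    (hW : IsOpen W) (hf : ContDiffOn ℝ ∞ f W) (hOW : O ×ˢ uIcc a b ⊆ W) :
    ContDiffOn ℝ ∞ (fun q ↦ ∫ s in a..b, f (q, s)) O := by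
  refine contDiffOn_infty.2 fun m ↦ ?_
  have hderiv {g : H × ℝ → E} (hg : ContDiffOn ℝ ∞ g W) {q : H} (hq : q ∈ O) :=
    hasFDerivAt_intervalIntegral_of_contDiffOn hW (hg.of_le (mod_cast le_top))
      fun s (hs : s ∈ uIcc a b) ↦ hOW (mk_mem_prod hq hs)
  induction m generalizing f with
  | zero => exact contDiffOn_zero.2 fun q hq ↦ (hderiv hf hq).continuousAt.continuousWithinAt
  | succ m ih =>
    rw [Nat.cast_succ]
    refine (contDiffOn_succ_iff_fderiv_apply hO.uniqueDiffOn).2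
      ⟨fun q hq ↦ (hderiv hf hq).differentiableAt.differentiableWithinAt, by simp, fun v ↦ ?_⟩
    have hf' : ContDiffOn ℝ ∞ (fderiv ℝ f) W := hf.fderiv_of_isOpen hW (m := ∞) (by simp)
    refine (ih (hf'.clm_apply (g := fun _ ↦ (v, 0)) contDiffOn_const)).congr fun q hq ↦ ?_
    have hint : IntervalIntegrable (fun s ↦ fderiv ℝ f (q, s) ∘L .inl ℝ H ℝ) volume a b :=
      ((continuousOn_comp_prodMk_left hf'.continuousOn fun s hs ↦
        hOW (mk_mem_prod hq hs)).clm_comp continuousOn_const).intervalIntegrable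
    rw [fderivWithin_of_isOpen hO hq, (hderiv hf hq).fderiv,
      ContinuousLinearMap.intervalIntegral_apply hint]
    rfl

end ParametricIntegral

section PartialDerivative

variable {n : ℕ} {k : Fin n} {f : (Fin n → ℝ) → ℝ} {U : Set (Fin n → ℝ)} {x : Fin n → ℝ}

theorem contDiffOn_pd (hU : IsOpen U) (hf : ContDiffOn ℝ ∞ f U) (k : Fin n) :
    ContDiffOn ℝ ∞ (pd k f) U :=
  (hf.fderiv_of_isOpen hU (m := ∞) (by simp)).clm_apply contDiffOn_const

theorem pd_congr (hU : IsOpen U) {f' : (Fin n → ℝ) → ℝ} (h : EqOn f f' U) (hx : x ∈ U) :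
    pd k f x = pd k f' x := by
  rw [pd, (h.eventuallyEq_of_mem (hU.mem_nhds hx)).fderiv_eq, pd]

theorem sum_mul_pd (f : (Fin n → ℝ) → ℝ) (x u : Fin n → ℝ) :
    ∑ j, u j * pd j f x = fderiv ℝ f x u := by
  conv_rhs => rw [pi_eq_sum_univ' u, map_sum]
  exact Finset.sum_congr rfl fun j _ ↦ ((fderiv ℝ f x).map_smul (u j) (Pi.single j 1)).symm

theorem hasDerivAt_comp_update {t : ℝ} (hf : DifferentiableAt ℝ f (Function.update x k t)) :
    HasDerivAt (fun s ↦ f (Function.update x k s)) (pd k f (Function.update x k t)) t :=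
  hf.hasFDerivAt.comp_hasDerivAt t (hasDerivAt_update x k t)

theorem pd_eq_of_hasDerivAt_update {f' : ℝ} (hf : DifferentiableAt ℝ f x)
    (h : HasDerivAt (fun t ↦ f (Function.update x k t)) f' (x k)) : pd k f x = f' := by
  have := hasDerivAt_comp_update (k := k) (t := x k) (by rwa [Function.update_eq_self])
  rw [Function.update_eq_self] at this
  exact this.unique h

end PartialDerivative

section IntegrationAlongCoordinate

variable {n : ℕ} {k : Fin n} {Ω : Set (Fin n → ℝ)} {q : Fin n → ℝ}

/-- Each line of `Ω` in the `k`-th coordinate direction is star-shaped about the hyperplane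
`q k = 0`. This is what integration from that hyperplane requires of the product `I × Σ'`. -/
def StarConvexAlong (k : Fin n) (Ω : Set (Fin n → ℝ)) : Prop :=
  ∀ q ∈ Ω, ∀ t ∈ uIcc 0 (q k), Function.update q k t ∈ Ω

theorem StarConvexAlong.of_update_mem {I : Set ℝ} (hI : I.OrdConnected) (h0 : 0 ∈ I)
    (hΩI : ∀ q ∈ Ω, q k ∈ I) (hIΩ : ∀ q ∈ Ω, ∀ t ∈ I, Function.update q k t ∈ Ω) :
    StarConvexAlong k Ω :=
  fun q hq t ht ↦ hIΩ q hq t (hI.uIcc_subset h0 (hΩI q hq) ht)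

theorem StarConvexAlong.mapsTo_update_zero (hst : StarConvexAlong k Ω) :
    MapsTo (fun q ↦ Function.update q k 0) Ω {q ∈ Ω | q k = 0} :=
  fun q hq ↦ ⟨hst q hq 0 left_mem_uIcc, Function.update_self ..⟩

/-- The antiderivative of `h` in the `k`-th coordinate that vanishes on `q k = 0`. -/
noncomputable def primitiveAlong (k : Fin n) (h : (Fin n → ℝ) → ℝ) (q : Fin n → ℝ) : ℝ :=
  ∫ t in 0..q k, h (Function.update q k t)

theorem primitiveAlong_of_eq_zero (h : (Fin n → ℝ) → ℝ) (hq : q k = 0) :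
    primitiveAlong k h q = 0 := by
  rw [primitiveAlong, hq, intervalIntegral.integral_same]

theorem primitiveAlong_eq_mul_integral (h : (Fin n → ℝ) → ℝ) (q : Fin n → ℝ) :
    primitiveAlong k h q = q k * ∫ s in (0 : ℝ)..1, h (Function.update q k (q k * s)) := by
  simpa [primitiveAlong] using (intervalIntegral.mul_integral_comp_mul_left (a := 0) (b := 1)
    (f := fun t ↦ h (Function.update q k t)) (q k)).symm

theorem contDiff_update_uncurry (k : Fin n) :
    ContDiff ℝ ∞ fun p : (Fin n → ℝ) × ℝ ↦ Function.update p.1 k p.2 := by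
  refine contDiff_pi.2 fun i ↦ ?_
  obtain rfl | hi := eq_or_ne i k
  · simpa using contDiff_snd
  · simpa [Function.update_of_ne hi] using by fun_prop

/-- Rescaling to the fixed interval `[0, 1]` moves the variable endpoint into the integrand. -/
theorem contDiffOn_primitiveAlong (hΩ : IsOpen Ω) (hst : StarConvexAlong k Ω)
    {h : (Fin n → ℝ) → ℝ} (hh : ContDiffOn ℝ ∞ h Ω) : ContDiffOn ℝ ∞ (primitiveAlong k h) Ω := by
  let scale : (Fin n → ℝ) × ℝ → Fin n → ℝ := fun p ↦ Function.update p.1 k (p.1 k * p.2)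
  have hscale : ContDiff ℝ ∞ scale := (contDiff_update_uncurry k).comp
    (f := fun p : (Fin n → ℝ) × ℝ ↦ (p.1, p.1 k * p.2)) (by fun_prop)
  have hmem : Ω ×ˢ uIcc (0 : ℝ) 1 ⊆ scale ⁻¹' Ω := by
    rintro ⟨q, s⟩ ⟨hq, hs⟩
    have hqs : q k * s ∈ (q k * ·) '' uIcc 0 1 := mem_image_of_mem _ hs
    rw [image_const_mul_uIcc, mul_zero, mul_one] at hqs
    exact hst q hq _ hqs
  have hint : ContDiffOn ℝ ∞ (fun q ↦ ∫ s in (0 : ℝ)..1, h (scale (q, s))) Ω :=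
    contDiffOn_intervalIntegral (f := h ∘ scale) hΩ (hΩ.preimage hscale.continuous)
      (hh.comp hscale.contDiffOn (mapsTo_preimage scale Ω)) hmem
  exact ((contDiff_apply ℝ ℝ k).contDiffOn.mul hint).congr
    fun q _ ↦ primitiveAlong_eq_mul_integral h q

theorem pd_primitiveAlong (hΩ : IsOpen Ω) (hst : StarConvexAlong k Ω) {h : (Fin n → ℝ) → ℝ}
    (hh : ContDiffOn ℝ ∞ h Ω) (hq : q ∈ Ω) : pd k (primitiveAlong k h) q = h q := by
  have hline : Continuous (Function.update q k) := by fun_prop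
  have hopen : IsOpen (Function.update q k ⁻¹' Ω) := hΩ.preimage hline
  have hcont : ContinuousOn (h ∘ Function.update q k) (Function.update q k ⁻¹' Ω) :=
    hh.continuousOn.comp hline.continuousOn (mapsTo_preimage _ _)
  have hmem : q k ∈ Function.update q k ⁻¹' Ω := by rwa [mem_preimage, Function.update_eq_self]
  have hint : HasDerivAt (fun u ↦ ∫ t in 0..u, h (Function.update q k t)) (h q) (q k) := by
    simpa using intervalIntegral.integral_hasDerivAt_right
      (hcont.mono (hst q hq)).intervalIntegrable
      (hcont.stronglyMeasurableAtFilter hopen _ hmem) (hcont.continuousAt (hopen.mem_nhds hmem))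
  refine pd_eq_of_hasDerivAt_update
    (differentiableAt_of_contDiffOn_infty hΩ (contDiffOn_primitiveAlong hΩ hst hh) hq) ?_
  simpa [primitiveAlong] using hint

theorem pd_comp_update_self {f : (Fin n → ℝ) → ℝ} {c : ℝ}
    (hf : DifferentiableAt ℝ (fun q ↦ f (Function.update q k c)) q) :
    pd k (fun q ↦ f (Function.update q k c)) q = 0 :=
  pd_eq_of_hasDerivAt_update hf (by simpa using hasDerivAt_const _ _)

theorem exists_pd_eq_of_slice (hΩ : IsOpen Ω) (hst : StarConvexAlong k Ω)
    {h f₀ : (Fin n → ℝ) → ℝ} (hh : ContDiffOn ℝ ∞ h Ω)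
    (hf₀ : ContDiffOn ℝ ∞ f₀ {q ∈ Ω | q k = 0}) :
    ∃ f, ContDiffOn ℝ ∞ f Ω ∧ EqOn (pd k f) h Ω ∧ EqOn f f₀ {q ∈ Ω | q k = 0} := by
  have hext : ContDiffOn ℝ ∞ (fun q ↦ f₀ (Function.update q k 0)) Ω :=
    hf₀.comp ((contDiff_update_uncurry k).comp (contDiff_id.prodMk contDiff_const)).contDiffOn
      hst.mapsTo_update_zero
  have hprim := contDiffOn_primitiveAlong hΩ hst hh
  refine ⟨fun q ↦ f₀ (Function.update q k 0) + primitiveAlong k h q, hext.add hprim,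
    fun q hq ↦ ?_, fun q hq ↦ ?_⟩
  · have dext := differentiableAt_of_contDiffOn_infty hΩ hext hq
    have dprim := differentiableAt_of_contDiffOn_infty hΩ hprim hq
    calc pd k (fun q ↦ f₀ (Function.update q k 0) + primitiveAlong k h q) q
        = pd k (fun q ↦ f₀ (Function.update q k 0)) q + pd k (primitiveAlong k h) q := by
          rw [pd, fderiv_fun_add dext dprim, add_apply, pd, pd]
      _ = h q := by rw [pd_comp_update_self dext, pd_primitiveAlong hΩ hst hh hq, zero_add]
  · have hupd : Function.update q k 0 = q := by rw [← hq.2, Function.update_eq_self]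
    simp only [hupd, primitiveAlong_of_eq_zero h hq.2, add_zero]

theorem eqOn_of_pd_eqOn (hΩ : IsOpen Ω) (hst : StarConvexAlong k Ω) {f₁ f₂ : (Fin n → ℝ) → ℝ}
    (hf₁ : DifferentiableOn ℝ f₁ Ω) (hf₂ : DifferentiableOn ℝ f₂ Ω)
    (hpd : EqOn (pd k f₁) (pd k f₂) Ω) (hslice : EqOn f₁ f₂ {q ∈ Ω | q k = 0}) :
    EqOn f₁ f₂ Ω := by
  intro q hq
  have hderiv : ∀ t ∈ uIcc 0 (q k), HasDerivAt
      (fun t ↦ f₁ (Function.update q k t) - f₂ (Function.update q k t)) 0 t := by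
    intro t ht
    have hmem := hΩ.mem_nhds (hst q hq t ht)
    simpa [hpd (hst q hq t ht)] using (hasDerivAt_comp_update (hf₁.differentiableAt hmem)).fun_sub
      (hasDerivAt_comp_update (hf₂.differentiableAt hmem))
  have hconst := intervalIntegral.integral_eq_sub_of_hasDerivAt hderiv intervalIntegrable_const
  rw [intervalIntegral.integral_zero, Function.update_eq_self,
    hslice (hst.mapsTo_update_zero hq)] at hconst
  linarith

end IntegrationAlongCoordinate

section MatrixDerivative

variable {E F : Type*} [NormedAddCommGroup E] [NormedSpace ℝ E]
  [NormedAddCommGroup F] [NormedSpace ℝ F] {l m n : Type*}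

/-- The derivative at `x` in the direction `u` of a matrix-valued map, taken entrywise because
matrices carry no canonical norm. -/
noncomputable def matrixDeriv (A : E → Matrix m n ℝ) (x u : E) : Matrix m n ℝ :=
  .of fun i j ↦ fderiv ℝ (fun p ↦ A p i j) x u

theorem matrixDeriv_transpose (A : E → Matrix m n ℝ) (x u : E) :
    matrixDeriv (fun p ↦ (A p)ᵀ) x u = (matrixDeriv A x u)ᵀ := rfl

theorem differentiableAt_mul_apply [Fintype m] {A : E → Matrix l m ℝ} {B : E → Matrix m n ℝ} {x : E}
    (hA : ∀ i j, DifferentiableAt ℝ (fun p ↦ A p i j) x)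
    (hB : ∀ i j, DifferentiableAt ℝ (fun p ↦ B p i j) x) (i : l) (j : n) :
    DifferentiableAt ℝ (fun p ↦ (A p * B p) i j) x := by
  simp only [Matrix.mul_apply]
  exact .fun_sum fun k _ ↦ (hA i k).fun_mul (hB k j)

theorem matrixDeriv_mul [Fintype m] {A : E → Matrix l m ℝ} {B : E → Matrix m n ℝ} {x : E}
    (hA : ∀ i j, DifferentiableAt ℝ (fun p ↦ A p i j) x)
    (hB : ∀ i j, DifferentiableAt ℝ (fun p ↦ B p i j) x) (u : E) :
    matrixDeriv (fun p ↦ A p * B p) x u = matrixDeriv A x u * B x + A x * matrixDeriv B x u := by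
  ext i j
  simp only [matrixDeriv, Matrix.add_apply, Matrix.mul_apply, Matrix.of_apply]
  rw [fderiv_fun_sum fun k _ ↦ (hA i k).fun_mul (hB k j), sum_apply,
    ← Finset.sum_add_distrib]
  refine Finset.sum_congr rfl fun k _ ↦ ?_
  simp only [fderiv_fun_mul (hA i k) (hB k j), add_apply, smul_apply, smul_eq_mul]
  ring

theorem matrixDeriv_comp {A : F → Matrix m n ℝ} {φ : E → F} {x : E}
    (hA : ∀ i j, DifferentiableAt ℝ (fun p ↦ A p i j) (φ x)) (hφ : DifferentiableAt ℝ φ x) (u : E) :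
    matrixDeriv (fun p ↦ A (φ p)) x u = matrixDeriv A (φ x) (fderiv ℝ φ x u) := by
  ext i j
  exact DFunLike.congr_fun (fderiv_fun_comp x (hA i j) hφ) u

end MatrixDerivative

section Pullback

variable {n : ℕ} {φ ψ v : (Fin n → ℝ) → Fin n → ℝ}
  {a b : (Fin n → ℝ) → Matrix (Fin n) (Fin n) ℝ} {U Ω : Set (Fin n → ℝ)} {q : Fin n → ℝ}

/-- The Jacobian matrix `∂φ^i/∂x^j`. -/
noncomputable def jacobian (φ : (Fin n → ℝ) → Fin n → ℝ) (x : Fin n → ℝ) :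
    Matrix (Fin n) (Fin n) ℝ :=
  LinearMap.toMatrix' (fderiv ℝ φ x)

theorem jacobian_apply (hφ : DifferentiableAt ℝ φ q) (i j : Fin n) :
    jacobian φ q i j = pd j (fun p ↦ φ p i) q := by
  rw [jacobian, LinearMap.toMatrix'_apply, pd, fderiv_apply hφ]
  rfl

theorem jacobian_comp (hψ : DifferentiableAt ℝ ψ (φ q)) (hφ : DifferentiableAt ℝ φ q) :
    jacobian (ψ ∘ φ) q = jacobian ψ (φ q) * jacobian φ q := by
  rw [jacobian, fderiv_comp q hψ hφ, ContinuousLinearMap.toLinearMap_comp, LinearMap.toMatrix'_comp,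
    jacobian, jacobian]

theorem jacobian_congr (h : φ =ᶠ[𝓝 q] ψ) : jacobian φ q = jacobian ψ q := by
  rw [jacobian, h.fderiv_eq, jacobian]

theorem jacobian_id (q : Fin n → ℝ) : jacobian id q = 1 := by
  rw [jacobian, fderiv_id, ContinuousLinearMap.coe_id, LinearMap.toMatrix'_id]

theorem contDiffOn_jacobian (hU : IsOpen U) (hφ : ContDiffOn ℝ ∞ φ U) (i j : Fin n) :
    ContDiffOn ℝ ∞ (fun x ↦ jacobian φ x i j) U :=
  (contDiffOn_pd hU (contDiffOn_pi.1 hφ i) j).congr fun _ hx ↦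
    jacobian_apply (differentiableAt_of_contDiffOn_infty hU hφ hx) i j

theorem differentiableAt_jacobian (hφ : ContDiffAt ℝ 2 φ q) (i j : Fin n) :
    DifferentiableAt ℝ (fun x ↦ jacobian φ x i j) q := by
  have hφ' : DifferentiableAt ℝ (fderiv ℝ φ) q :=
    (hφ.fderiv_right (m := 1) (by norm_num)).differentiableAt one_ne_zero
  simp only [jacobian, LinearMap.toMatrix'_apply]
  exact differentiableAt_pi.1 (hφ'.clm_apply (differentiableAt_const (Pi.single j 1))) i

theorem matrixDeriv_jacobian (hφ : ContDiffAt ℝ 2 φ q) (u : Fin n → ℝ) :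
    matrixDeriv (jacobian φ) q u = jacobian (fun p ↦ fderiv ℝ φ p u) q := by
  have hφ' : DifferentiableAt ℝ (fderiv ℝ φ) q :=
    (hφ.fderiv_right (m := 1) (by norm_num)).differentiableAt one_ne_zero
  have hsecond (w w' : Fin n → ℝ) :
      fderiv ℝ (fun p ↦ fderiv ℝ φ p w) q w' = fderiv ℝ (fderiv ℝ φ) q w' w := by
    simp [fderiv_clm_apply hφ' (differentiableAt_const w)]
  ext i j
  have hcol := hφ'.clm_apply (differentiableAt_const (Pi.single j (1 : ℝ)))
  calc matrixDeriv (jacobian φ) q u i j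
      = fderiv ℝ (fun p ↦ fderiv ℝ φ p (Pi.single j 1) i) q u := by
        simp [matrixDeriv, jacobian, LinearMap.toMatrix'_apply]
    _ = fderiv ℝ (fderiv ℝ φ) q u (Pi.single j 1) i := by
        rw [fderiv_apply hcol, ← hsecond]
        rfl
    _ = fderiv ℝ (fderiv ℝ φ) q (Pi.single j 1) u i := by
        rw [(hφ.isSymmSndFDerivAt (by simp)).eq]
    _ = jacobian (fun p ↦ fderiv ℝ φ p u) q i j := by
        rw [jacobian, LinearMap.toMatrix'_apply, ← hsecond]
        rfl

/-- The pullback `φ^* a` of the covariant 2-tensor `a`, as a matrix. If `φ` is the inverse `x(y)` of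
a coordinate change `y`, this is the representative of `a` in the `y`-coordinates. -/
noncomputable def pullback (φ : (Fin n → ℝ) → Fin n → ℝ)
    (a : (Fin n → ℝ) → Matrix (Fin n) (Fin n) ℝ) (q : Fin n → ℝ) : Matrix (Fin n) (Fin n) ℝ :=
  (jacobian φ q)ᵀ * a (φ q) * jacobian φ q

theorem pullback_apply (hφ : DifferentiableAt ℝ φ q) (i j : Fin n) :
    pullback φ a q i j = ∑ k, ∑ l, a (φ q) k l *
      pd i (fun p ↦ φ p k) q * pd j (fun p ↦ φ p l) q := by
  simp only [pullback, Matrix.mul_apply, Matrix.transpose_apply, jacobian_apply hφ, Finset.sum_mul]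
  rw [Finset.sum_comm]
  exact Finset.sum_congr rfl fun k _ ↦ Finset.sum_congr rfl fun l _ ↦ by ring

theorem pullback_congr (h : a (φ q) = b (φ q)) : pullback φ a q = pullback φ b q := by
  rw [pullback, h, pullback]

theorem pullback_transpose (φ : (Fin n → ℝ) → Fin n → ℝ)
    (a : (Fin n → ℝ) → Matrix (Fin n) (Fin n) ℝ) (q : Fin n → ℝ) :
    pullback φ (fun x ↦ (a x)ᵀ) q = (pullback φ a q)ᵀ := by
  simp only [pullback, Matrix.transpose_mul, Matrix.transpose_transpose, Matrix.mul_assoc]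

theorem pullback_pullback (hψ : DifferentiableAt ℝ ψ (φ q)) (hφ : DifferentiableAt ℝ φ q) :
    pullback φ (pullback ψ a) q = pullback (ψ ∘ φ) a q := by
  simp only [pullback, jacobian_comp hψ hφ, Matrix.transpose_mul, Matrix.mul_assoc,
    Function.comp_apply]

theorem pullback_of_eventuallyEq_id (h : φ =ᶠ[𝓝 q] id) : pullback φ a q = a q := by
  simp [pullback, jacobian_congr h, jacobian_id, h.eq_of_nhds]

theorem contDiffOn_pullback (hΩ : IsOpen Ω) (hφ : ContDiffOn ℝ ∞ φ Ω) (hmaps : MapsTo φ Ω U)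
    (ha : ∀ i j, ContDiffOn ℝ ∞ (fun x ↦ a x i j) U) (i j : Fin n) :
    ContDiffOn ℝ ∞ (fun q ↦ pullback φ a q i j) Ω := by
  simp only [pullback, Matrix.mul_apply, Matrix.transpose_apply]
  exact .sum fun l _ ↦ (ContDiffOn.sum fun k _ ↦ (contDiffOn_jacobian hΩ hφ k i).mul
    ((ha k l).comp hφ hmaps)).mul (contDiffOn_jacobian hΩ hφ l j)

/-- The Lie derivative along the vector field `v` of the covariant 2-tensor `a`:
`v^l ∂_l a_{ij} + ∂_i v^l a_{lj} + a_{il} ∂_j v^l`. -/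
noncomputable def lieDeriv (v : (Fin n → ℝ) → Fin n → ℝ)
    (a : (Fin n → ℝ) → Matrix (Fin n) (Fin n) ℝ) (x : Fin n → ℝ) : Matrix (Fin n) (Fin n) ℝ :=
  matrixDeriv a x (v x) + (jacobian v x)ᵀ * a x + a x * jacobian v x

theorem lieDeriv_apply_of_isSymm {x : Fin n → ℝ} (hv : DifferentiableAt ℝ v x)
    (ha : (a x).IsSymm) (i j : Fin n) :
    lieDeriv v a x i j = ∑ l, v x l * pd l (fun q ↦ a q i j) x
      + ∑ l, pd i (fun q ↦ v q l) x * a x l j + ∑ l, pd j (fun q ↦ v q l) x * a x l i := by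
  simp only [lieDeriv, Matrix.add_apply, Matrix.mul_apply, Matrix.transpose_apply, matrixDeriv,
    Matrix.of_apply, jacobian_apply hv, sum_mul_pd]
  exact congrArg _ (Finset.sum_congr rfl fun l _ ↦ by rw [ha.apply, mul_comm])

theorem lieDeriv_transpose (v : (Fin n → ℝ) → Fin n → ℝ)
    (a : (Fin n → ℝ) → Matrix (Fin n) (Fin n) ℝ) (x : Fin n → ℝ) :
    lieDeriv v (fun p ↦ (a p)ᵀ) x = (lieDeriv v a x)ᵀ := by
  simp only [lieDeriv, matrixDeriv_transpose, Matrix.transpose_add, Matrix.transpose_mul,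
    Matrix.transpose_transpose]
  exact add_right_comm ..

/-- If `φ` carries the constant field `u` to `v`, differentiating along `u` commutes with pullback
to the Lie derivative along `v`. The symmetry of second derivatives gives
`∂_u (Dφ) = D(∂_u φ) = D(v ∘ φ) = (Dv ∘ φ) Dφ`; the rest is the product rule. -/
theorem matrixDeriv_pullback {u : Fin n → ℝ} (hφ : ContDiffAt ℝ 2 φ q)
    (hv : DifferentiableAt ℝ v (φ q)) (ha : ∀ i j, DifferentiableAt ℝ (fun x ↦ a x i j) (φ q))
    (hφv : (fun p ↦ fderiv ℝ φ p u) =ᶠ[𝓝 q] v ∘ φ) :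
    matrixDeriv (pullback φ a) q u = pullback φ (lieDeriv v a) q := by
  have dφ : DifferentiableAt ℝ φ q := hφ.differentiableAt two_ne_zero
  have dJ := differentiableAt_jacobian hφ
  have da (i j : Fin n) : DifferentiableAt ℝ (fun p ↦ a (φ p) i j) q :=
    (ha i j).comp (f := φ) q dφ
  have hJ : matrixDeriv (jacobian φ) q u = jacobian v (φ q) * jacobian φ q := by
    rw [matrixDeriv_jacobian hφ, jacobian_congr hφv, jacobian_comp hv dφ]
  have ha' : matrixDeriv (fun p ↦ a (φ p)) q u = matrixDeriv a (φ q) (v (φ q)) := by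
    rw [matrixDeriv_comp ha dφ, hφv.eq_of_nhds, Function.comp_apply]
  have hJt : matrixDeriv (fun p ↦ (jacobian φ p)ᵀ) q u
      = (jacobian φ q)ᵀ * (jacobian v (φ q))ᵀ := by
    rw [matrixDeriv_transpose, hJ, Matrix.transpose_mul]
  have dJt (i j : Fin n) : DifferentiableAt ℝ (fun p ↦ (jacobian φ p)ᵀ i j) q := dJ j i
  calc matrixDeriv (pullback φ a) q u
      = (matrixDeriv (fun p ↦ (jacobian φ p)ᵀ) q u * a (φ q)
          + (jacobian φ q)ᵀ * matrixDeriv (fun p ↦ a (φ p)) q u) * jacobian φ q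
        + (jacobian φ q)ᵀ * a (φ q) * matrixDeriv (jacobian φ) q u := by
        rw [← matrixDeriv_mul dJt da, ← matrixDeriv_mul (differentiableAt_mul_apply dJt da) dJ]
        rfl
    _ = pullback φ (lieDeriv v a) q := by
        rw [hJt, ha', hJ, pullback, lieDeriv]
        noncomm_ring

end Pullback

section Straightening

variable {n : ℕ} {k : Fin n} {v y x : (Fin n → ℝ) → Fin n → ℝ}
  {a b S G₀ : (Fin n → ℝ) → Matrix (Fin n) (Fin n) ℝ} {W W' h V₀ : (Fin n → ℝ) → ℝ}
  {U Ω : Set (Fin n → ℝ)} {p q : Fin n → ℝ}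

/-- `y : U → Ω` is a diffeomorphism of open sets with inverse `x`, and it straightens the vector
field `v` to the `k`-th coordinate field: `v^i ∂y^j/∂x^i = δ_k^j`. -/
structure IsStraightening (k : Fin n) (v : (Fin n → ℝ) → Fin n → ℝ) (U Ω : Set (Fin n → ℝ))
    (y x : (Fin n → ℝ) → Fin n → ℝ) : Prop where
  isOpen_source : IsOpen U
  isOpen_target : IsOpen Ω
  contDiffOn : ContDiffOn ℝ ∞ y U
  contDiffOn_symm : ContDiffOn ℝ ∞ x Ω
  mapsTo : MapsTo y U Ω
  mapsTo_symm : MapsTo x Ω U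
  leftInvOn : LeftInvOn x y U
  rightInvOn : RightInvOn x y Ω
  sum_mul_pd_eq : ∀ p ∈ U, ∀ j, ∑ i, v p i * pd i (fun w ↦ y w j) p = if j = k then 1 else 0

namespace IsStraightening

theorem differentiableAt (hs : IsStraightening k v U Ω y x) (hp : p ∈ U) :
    DifferentiableAt ℝ y p :=
  differentiableAt_of_contDiffOn_infty hs.isOpen_source hs.contDiffOn hp

theorem differentiableAt_symm (hs : IsStraightening k v U Ω y x) (hq : q ∈ Ω) :
    DifferentiableAt ℝ x q :=
  differentiableAt_of_contDiffOn_infty hs.isOpen_target hs.contDiffOn_symm hq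

theorem symm_comp_eventuallyEq (hs : IsStraightening k v U Ω y x) (hp : p ∈ U) :
    x ∘ y =ᶠ[𝓝 p] id :=
  hs.leftInvOn.eqOn.eventuallyEq_of_mem (hs.isOpen_source.mem_nhds hp)

theorem comp_symm_eventuallyEq (hs : IsStraightening k v U Ω y x) (hq : q ∈ Ω) :
    y ∘ x =ᶠ[𝓝 q] id :=
  hs.rightInvOn.eqOn.eventuallyEq_of_mem (hs.isOpen_target.mem_nhds hq)

theorem fderiv_apply_field (hs : IsStraightening k v U Ω y x) (hp : p ∈ U) :
    fderiv ℝ y p (v p) = Pi.single k 1 := by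
  ext j
  rw [Pi.single_apply, ← hs.sum_mul_pd_eq p hp j, sum_mul_pd, fderiv_apply (hs.differentiableAt hp)]
  rfl

theorem fderiv_symm_single (hs : IsStraightening k v U Ω y x) (hq : q ∈ Ω) :
    fderiv ℝ x q (Pi.single k 1) = v (x q) := by
  have hp := hs.mapsTo_symm hq
  have hqp : y (x q) = q := hs.rightInvOn hq
  calc fderiv ℝ x q (Pi.single k 1)
      = fderiv ℝ x (y (x q)) (fderiv ℝ y (x q) (v (x q))) := by
        rw [hs.fderiv_apply_field hp, hqp]
    _ = fderiv ℝ (x ∘ y) (x q) (v (x q)) := by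
        rw [fderiv_comp _ (hs.differentiableAt_symm (hs.mapsTo hp)) (hs.differentiableAt hp)]
        rfl
    _ = v (x q) := by
        rw [(hs.symm_comp_eventuallyEq hp).fderiv_eq, fderiv_id, ContinuousLinearMap.id_apply]

theorem contDiffOn_field (hs : IsStraightening k v U Ω y x) : ContDiffOn ℝ ∞ v U := by
  have hx : ContDiffOn ℝ ∞ (fun q ↦ fderiv ℝ x q (Pi.single k 1)) Ω :=
    (hs.contDiffOn_symm.fderiv_of_isOpen hs.isOpen_target (m := ∞) (by simp)).clm_apply
      contDiffOn_const
  refine (hx.comp hs.contDiffOn hs.mapsTo).congr fun p hp ↦ ?_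
  rw [Function.comp_apply, hs.fderiv_symm_single (hs.mapsTo hp), hs.leftInvOn hp]

theorem pullback_pullback_symm (hs : IsStraightening k v U Ω y x) (hp : p ∈ U) :
    pullback y (pullback x a) p = a p := by
  rw [pullback_pullback (hs.differentiableAt_symm (hs.mapsTo hp)) (hs.differentiableAt hp),
    pullback_of_eventuallyEq_id (hs.symm_comp_eventuallyEq hp)]

theorem pullback_symm_pullback (hs : IsStraightening k v U Ω y x) (hq : q ∈ Ω) :
    pullback x (pullback y a) q = a q := by
  rw [pullback_pullback (hs.differentiableAt (hs.mapsTo_symm hq)) (hs.differentiableAt_symm hq),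
    pullback_of_eventuallyEq_id (hs.comp_symm_eventuallyEq hq)]

theorem eqOn_of_pullback_symm (hs : IsStraightening k v U Ω y x)
    (hab : EqOn (pullback x a) (pullback x b) Ω) : EqOn a b U := fun p hp ↦ by
  rw [← hs.pullback_pullback_symm (a := a) hp, ← hs.pullback_pullback_symm (a := b) hp]
  exact pullback_congr (hab (hs.mapsTo hp))

theorem pd_pullback_symm (hs : IsStraightening k v U Ω y x)
    (ha : ∀ i j, ContDiffOn ℝ ∞ (fun p ↦ a p i j) U) (hq : q ∈ Ω) (i j : Fin n) :
    pd k (fun q ↦ pullback x a q i j) q = pullback x (lieDeriv v a) q i j := by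
  have hp := hs.mapsTo_symm hq
  have hΩ := hs.isOpen_target.mem_nhds hq
  have hx : ContDiffAt ℝ 2 x q := (hs.contDiffOn_symm.contDiffAt hΩ).of_le (by norm_cast)
  have hv := differentiableAt_of_contDiffOn_infty hs.isOpen_source hs.contDiffOn_field hp
  have hxv : EqOn (fun q ↦ fderiv ℝ x q (Pi.single k 1)) (v ∘ x) Ω :=
    fun _ hq' ↦ hs.fderiv_symm_single hq'
  have hpd := matrixDeriv_pullback hx hv
    (fun i j ↦ differentiableAt_of_contDiffOn_infty hs.isOpen_source (ha i j) hp)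
    (hxv.eventuallyEq_of_mem hΩ)
  exact congrFun₂ hpd i j

theorem pd_comp_symm (hs : IsStraightening k v U Ω y x) (hW : ContDiffOn ℝ ∞ W U) (hq : q ∈ Ω) :
    pd k (W ∘ x) q = fderiv ℝ W (x q) (v (x q)) := by
  have dW := differentiableAt_of_contDiffOn_infty hs.isOpen_source hW (hs.mapsTo_symm hq)
  rw [pd, fderiv_comp q dW (hs.differentiableAt_symm hq), ContinuousLinearMap.comp_apply,
    hs.fderiv_symm_single hq]

theorem exists_lieDeriv_eqOn (hs : IsStraightening k v U Ω y x) (hΩ : StarConvexAlong k Ω)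
    (hS : ∀ i j, ContDiffOn ℝ ∞ (fun p ↦ S p i j) U)
    (hG₀ : ∀ i j, ContDiffOn ℝ ∞ (fun q ↦ G₀ q i j) {q ∈ Ω | q k = 0}) :
    ∃ a : (Fin n → ℝ) → Matrix (Fin n) (Fin n) ℝ, (∀ i j, ContDiffOn ℝ ∞ (fun p ↦ a p i j) U) ∧
      EqOn (lieDeriv v a) S U ∧ EqOn (pullback x a) G₀ {q ∈ Ω | q k = 0} := by
  choose G hG hpdG hGslice using fun i j ↦ exists_pd_eq_of_slice hs.isOpen_target hΩ
    (contDiffOn_pullback hs.isOpen_target hs.contDiffOn_symm hs.mapsTo_symm hS i j) (hG₀ i j)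
  let Ghat : (Fin n → ℝ) → Matrix (Fin n) (Fin n) ℝ := fun q ↦ .of fun i j ↦ G i j q
  have ha := contDiffOn_pullback (a := Ghat) hs.isOpen_source hs.contDiffOn hs.mapsTo hG
  refine ⟨pullback y Ghat, ha, hs.eqOn_of_pullback_symm fun q hq ↦ ?_, fun q hq ↦ ?_⟩
  · ext i j
    have hrep : EqOn (fun q ↦ pullback x (pullback y Ghat) q i j) (G i j) Ω :=
      fun _ hq' ↦ by
      simp only [hs.pullback_symm_pullback hq', Ghat, Matrix.of_apply]
    rw [← hs.pd_pullback_symm ha hq, pd_congr hs.isOpen_target hrep hq, hpdG i j hq]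
  · ext i j
    rw [hs.pullback_symm_pullback hq.1]
    exact hGslice i j hq

theorem eqOn_of_lieDeriv_eqOn (hs : IsStraightening k v U Ω y x) (hΩ : StarConvexAlong k Ω)
    (ha : ∀ i j, ContDiffOn ℝ ∞ (fun p ↦ a p i j) U)
    (hb : ∀ i j, ContDiffOn ℝ ∞ (fun p ↦ b p i j) U)
    (hab : EqOn (lieDeriv v a) (lieDeriv v b) U)
    (hslice : EqOn (pullback x a) (pullback x b) {q ∈ Ω | q k = 0}) : EqOn a b U := by
  have hsmooth {c : (Fin n → ℝ) → Matrix (Fin n) (Fin n) ℝ}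
      (hc : ∀ i j, ContDiffOn ℝ ∞ (fun p ↦ c p i j) U) (i j : Fin n) :
      DifferentiableOn ℝ (fun q ↦ pullback x c q i j) Ω :=
    (contDiffOn_pullback hs.isOpen_target hs.contDiffOn_symm hs.mapsTo_symm hc i j).differentiableOn
      (by simp)
  refine hs.eqOn_of_pullback_symm fun q hq ↦ Matrix.ext fun i j ↦ eqOn_of_pd_eqOn hs.isOpen_target
    hΩ (hsmooth ha i j) (hsmooth hb i j) (fun q hq ↦ ?_) (fun q hq ↦ congrFun₂ (hslice hq) i j) hq
  rw [hs.pd_pullback_symm ha hq, hs.pd_pullback_symm hb hq,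
    pullback_congr (hab (hs.mapsTo_symm hq))]

/-- The transpose of `a` has the same Lie derivative and slice data, so uniqueness applies. -/
theorem isSymm_of_lieDeriv_isSymm (hs : IsStraightening k v U Ω y x) (hΩ : StarConvexAlong k Ω)
    (ha : ∀ i j, ContDiffOn ℝ ∞ (fun p ↦ a p i j) U) (hlie : ∀ p ∈ U, (lieDeriv v a p).IsSymm)
    (hslice : ∀ q ∈ {q ∈ Ω | q k = 0}, (pullback x a q).IsSymm) : ∀ p ∈ U, (a p).IsSymm :=
  hs.eqOn_of_lieDeriv_eqOn hΩ (fun i j ↦ ha j i) ha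
    (fun p hp ↦ (lieDeriv_transpose v a p).trans (hlie p hp))
    (fun q hq ↦ (pullback_transpose x a q).trans (hslice q hq))

theorem exists_fderiv_eqOn (hs : IsStraightening k v U Ω y x) (hΩ : StarConvexAlong k Ω)
    (hh : ContDiffOn ℝ ∞ h U) (hV₀ : ContDiffOn ℝ ∞ V₀ {q ∈ Ω | q k = 0}) :
    ∃ W, ContDiffOn ℝ ∞ W U ∧ EqOn (fun p ↦ fderiv ℝ W p (v p)) h U ∧
      EqOn (W ∘ x) V₀ {q ∈ Ω | q k = 0} := by
  obtain ⟨f, hf, hpdf, hfslice⟩ := exists_pd_eq_of_slice hs.isOpen_target hΩ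
    (hh.comp hs.contDiffOn_symm hs.mapsTo_symm) hV₀
  have hW := hf.comp hs.contDiffOn hs.mapsTo
  have hrep : EqOn ((f ∘ y) ∘ x) f Ω := fun q hq ↦ congrArg f (hs.rightInvOn hq)
  refine ⟨f ∘ y, hW, fun p hp ↦ ?_, fun q hq ↦ (hrep hq.1).trans (hfslice hq)⟩
  have hq := hs.mapsTo hp
  have hpd := hs.pd_comp_symm hW hq
  rwa [pd_congr hs.isOpen_target hrep hq, hpdf hq, Function.comp_apply, hs.leftInvOn hp,
    eq_comm] at hpd

theorem eqOn_of_fderiv_eqOn (hs : IsStraightening k v U Ω y x) (hΩ : StarConvexAlong k Ω)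
    (hW : ContDiffOn ℝ ∞ W U) (hW' : ContDiffOn ℝ ∞ W' U)
    (hWW' : EqOn (fun p ↦ fderiv ℝ W p (v p)) (fun p ↦ fderiv ℝ W' p (v p)) U)
    (hslice : EqOn (W ∘ x) (W' ∘ x) {q ∈ Ω | q k = 0}) : EqOn W W' U := by
  have hsmooth {f : (Fin n → ℝ) → ℝ} (hf : ContDiffOn ℝ ∞ f U) : DifferentiableOn ℝ (f ∘ x) Ω :=
    (hf.comp hs.contDiffOn_symm hs.mapsTo_symm).differentiableOn (by simp)
  have hΩeq : EqOn (W ∘ x) (W' ∘ x) Ω :=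
    eqOn_of_pd_eqOn hs.isOpen_target hΩ (hsmooth hW) (hsmooth hW') (fun q hq ↦ by
      rw [hs.pd_comp_symm hW hq, hs.pd_comp_symm hW' hq]
      exact hWW' (hs.mapsTo_symm hq)) hslice
  intro p hp
  have hyp := hΩeq (hs.mapsTo hp)
  rwa [Function.comp_apply, Function.comp_apply, hs.leftInvOn hp] at hyp

end IsStraightening

/-- `(a, W)` is a smooth solution on `U`, with `a` symmetric, of `L_v a = S` and `v^j ∂_j W = h`
whose representatives under the parametrization `x` of `U` by `Ω` equal `G₀` and `V₀` on the slice
`q k = 0`. For `v = λ`, `S = ∂g/∂x¹` and `h = ∂V/∂x¹` these are the `ĝ`- and `V̂`-equations; they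
are spelled out in coordinates, in the form they take for symmetric `a`. -/
def IsSolution (k : Fin n) (v x : (Fin n → ℝ) → Fin n → ℝ) (U Ω : Set (Fin n → ℝ))
    (S : (Fin n → ℝ) → Matrix (Fin n) (Fin n) ℝ) (h : (Fin n → ℝ) → ℝ)
    (G₀ : (Fin n → ℝ) → Matrix (Fin n) (Fin n) ℝ) (V₀ : (Fin n → ℝ) → ℝ)
    (a : (Fin n → ℝ) → Matrix (Fin n) (Fin n) ℝ) (W : (Fin n → ℝ) → ℝ) : Prop :=
  (∀ i j, ContDiffOn ℝ ∞ (fun p ↦ a p i j) U) ∧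
  (∀ p ∈ U, (a p).IsSymm) ∧
  ContDiffOn ℝ ∞ W U ∧
  (∀ p ∈ U, ∀ i j, ∑ l, v p l * pd l (fun q ↦ a q i j) p
    + ∑ l, pd i (fun q ↦ v q l) p * a p l j + ∑ l, pd j (fun q ↦ v q l) p * a p l i = S p i j) ∧
  (∀ p ∈ U, ∑ j, v p j * pd j W p = h p) ∧
  (∀ q ∈ {q ∈ Ω | q k = 0},
    (∀ i j, ∑ l, ∑ m, a (x q) l m * pd i (fun p ↦ x p l) q * pd j (fun p ↦ x p m) q = G₀ q i j) ∧
    W (x q) = V₀ q)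

theorem IsStraightening.isSolution_iff (hs : IsStraightening k v U Ω y x) :
    IsSolution k v x U Ω S h G₀ V₀ a W ↔
      (∀ i j, ContDiffOn ℝ ∞ (fun p ↦ a p i j) U) ∧ (∀ p ∈ U, (a p).IsSymm) ∧
      ContDiffOn ℝ ∞ W U ∧ EqOn (lieDeriv v a) S U ∧ EqOn (fun p ↦ fderiv ℝ W p (v p)) h U ∧
      EqOn (pullback x a) G₀ {q ∈ Ω | q k = 0} ∧ EqOn (W ∘ x) V₀ {q ∈ Ω | q k = 0} := by
  refine and_congr_right fun _ ↦ and_congr_right fun hsymm ↦ and_congr_right fun _ ↦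
    and_congr (forall₂_congr fun p hp ↦ ?_) (and_congr (forall₂_congr fun p _ ↦ ?_) ?_)
  · have hv := differentiableAt_of_contDiffOn_infty hs.isOpen_source hs.contDiffOn_field hp
    simp only [← lieDeriv_apply_of_isSymm hv (hsymm p hp), Matrix.ext_iff]
  · rw [sum_mul_pd]
  · rw [EqOn, EqOn, ← forall₂_and]
    refine forall₂_congr fun q hq ↦ and_congr_left' ?_
    simp only [← pullback_apply (hs.differentiableAt_symm hq.1), Matrix.ext_iff]

theorem ghat_Vhat_unique_solution_with_initial_data_general (hs : IsStraightening k v U Ω y x)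
    (hΩ : StarConvexAlong k Ω)
    (hS : ∀ i j, ContDiffOn ℝ ∞ (fun p ↦ S p i j) U) (hSsymm : ∀ p ∈ U, (S p).IsSymm)
    (hh : ContDiffOn ℝ ∞ h U)
    (hG₀ : ∀ i j, ContDiffOn ℝ ∞ (fun q ↦ G₀ q i j) {q ∈ Ω | q k = 0})
    (hG₀symm : ∀ q ∈ {q ∈ Ω | q k = 0}, (G₀ q).IsSymm)
    (hV₀ : ContDiffOn ℝ ∞ V₀ {q ∈ Ω | q k = 0}) :
    ∃ a W, IsSolution k v x U Ω S h G₀ V₀ a W ∧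
      ∀ a' W', IsSolution k v x U Ω S h G₀ V₀ a' W' → ∀ p ∈ U, a' p = a p ∧ W' p = W p := by
  obtain ⟨a, ha, haS, haG₀⟩ := hs.exists_lieDeriv_eqOn hΩ hS hG₀
  obtain ⟨W, hW, hWh, hWV₀⟩ := hs.exists_fderiv_eqOn hΩ hh hV₀
  have hasymm : ∀ p ∈ U, (a p).IsSymm := hs.isSymm_of_lieDeriv_isSymm hΩ ha
    (fun p hp ↦ by rw [haS hp]; exact hSsymm p hp) (fun q hq ↦ by rw [haG₀ hq]; exact hG₀symm q hq)
  refine ⟨a, W, hs.isSolution_iff.2 ⟨ha, hasymm, hW, haS, hWh, haG₀, hWV₀⟩, fun a' W' hsol ↦ ?_⟩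
  obtain ⟨ha', -, hW', haS', hWh', haG₀', hWV₀'⟩ := hs.isSolution_iff.1 hsol
  have haa' := hs.eqOn_of_lieDeriv_eqOn hΩ ha' ha (haS'.trans haS.symm) (haG₀'.trans haG₀.symm)
  have hWW' := hs.eqOn_of_fderiv_eqOn hΩ hW' hW (hWh'.trans hWh.symm) (hWV₀'.trans hWV₀.symm)
  exact fun p hp ↦ ⟨haa' hp, hWW' hp⟩

end Straightening

/-- **Theorem 3.3.**  Given a non-zero solution of the λ-equations (`m = 1`),
straightened by a diffeomorphism `y` with product image `Ω = I × Σ'`, the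
ĝ- and V̂-equations have a unique solution with prescribed initial data on the
slice `Σ = {y¹ = 0}`. -/
theorem ghat_Vhat_unique_solution_with_initial_data
    {n : ℕ} (U : Set (Fin (n+1) → ℝ)) (hUopen : IsOpen U)
    (g : (Fin (n+1) → ℝ) → Matrix (Fin (n+1)) (Fin (n+1)) ℝ)
    (hg : ∀ i j, ContDiffOn ℝ (⊤ : ℕ∞) (fun x => g x i j) U)
    (hgsym : ∀ x ∈ U, (g x).IsSymm)
    (hginv : ∀ x ∈ U, IsUnit (g x).det)
    (V : (Fin (n+1) → ℝ) → ℝ) (hV : ContDiffOn ℝ (⊤ : ℕ∞) V U)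
    (lam : (Fin (n+1) → ℝ) → Fin (n+1) → ℝ)
    (hlam : ∀ i, ContDiffOn ℝ (⊤ : ℕ∞) (fun x => lam x i) U)
    (hlamne : ∀ x ∈ U, lam x ≠ 0)
    -- λ solves the λ-equations
    (hlamEq : ∀ x ∈ U, ∀ k, pd k (fun q => ∑ i, g q 0 i * lam q i) x
        - 2 * ∑ i, chr g k 0 i x * lam x i = 0)
    -- y : U → Ω is a diffeomorphism with inverse xof
    (Ω : Set (Fin (n+1) → ℝ)) (hΩopen : IsOpen Ω)
    (y xof : (Fin (n+1) → ℝ) → (Fin (n+1) → ℝ))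
    (hy : ∀ j, ContDiffOn ℝ (⊤ : ℕ∞) (fun x => y x j) U)
    (hxof : ∀ j, ContDiffOn ℝ (⊤ : ℕ∞) (fun q => xof q j) Ω)
    (himg : y '' U = Ω)
    (hleft : ∀ x ∈ U, xof (y x) = x)
    (hright : ∀ q ∈ Ω, xof q ∈ U ∧ y (xof q) = q)
    -- y straightens λ : λ^i ∂y^j/∂x^i = δ_1^j
    (hstraight : ∀ x ∈ U, ∀ j,
      ∑ i, lam x i * pd i (fun w => y w j) x = if j = 0 then 1 else 0)
    -- Ω = I × Σ' with I ∋ 0 an interval, and the slice Σ = {y¹ = 0} is nonempty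
    (I : Set ℝ) (hI0 : (0 : ℝ) ∈ I) (hIconn : I.OrdConnected)
    (hprod1 : ∀ q ∈ Ω, q 0 ∈ I)
    (hprod2 : ∀ q ∈ Ω, ∀ t ∈ I, Function.update q 0 t ∈ Ω)
    (hslice : {q ∈ Ω | q 0 = 0}.Nonempty)
    -- smooth symmetric matrix initial data Ĝ⁰ and scalar initial data V̂⁰ on Σ
    (G0 : (Fin (n+1) → ℝ) → Matrix (Fin (n+1)) (Fin (n+1)) ℝ)
    (hG0 : ∀ i j, ContDiffOn ℝ (⊤ : ℕ∞) (fun q => G0 q i j) {q ∈ Ω | q 0 = 0})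
    (hG0sym : ∀ q ∈ {q ∈ Ω | q 0 = 0}, (G0 q).IsSymm)
    (V0 : (Fin (n+1) → ℝ) → ℝ)
    (hV0 : ContDiffOn ℝ (⊤ : ℕ∞) V0 {q ∈ Ω | q 0 = 0}) :
    ∃ ghat : (Fin (n+1) → ℝ) → Matrix (Fin (n+1)) (Fin (n+1)) ℝ,
    ∃ Vhat : (Fin (n+1) → ℝ) → ℝ,
      ((∀ i j, ContDiffOn ℝ (⊤ : ℕ∞) (fun x => ghat x i j) U) ∧
       (∀ x ∈ U, (ghat x).IsSymm) ∧
       ContDiffOn ℝ (⊤ : ℕ∞) Vhat U ∧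
       -- the ĝ-equations
       (∀ x ∈ U, ∀ i j,
          ∑ l, lam x l * pd l (fun q => ghat q i j) x
          + ∑ l, pd i (fun q => lam q l) x * ghat x l j
          + ∑ l, pd j (fun q => lam q l) x * ghat x l i
          = pd 0 (fun q => g q i j) x) ∧
       -- the V̂-equation
       (∀ x ∈ U, ∑ j, lam x j * pd j Vhat x = pd 0 V x) ∧
       -- the y-coordinate representatives restrict to Ĝ⁰ and V̂⁰ on the slice Σ
       (∀ q ∈ {q ∈ Ω | q 0 = 0},
          (∀ i j, ∑ k, ∑ l, ghat (xof q) k l *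
              pd i (fun p => xof p k) q * pd j (fun p => xof p l) q = G0 q i j) ∧
          Vhat (xof q) = V0 q)) ∧
      -- uniqueness
      (∀ ghat' : (Fin (n+1) → ℝ) → Matrix (Fin (n+1)) (Fin (n+1)) ℝ,
       ∀ Vhat' : (Fin (n+1) → ℝ) → ℝ,
        ((∀ i j, ContDiffOn ℝ (⊤ : ℕ∞) (fun x => ghat' x i j) U) ∧
         (∀ x ∈ U, (ghat' x).IsSymm) ∧
         ContDiffOn ℝ (⊤ : ℕ∞) Vhat' U ∧
         (∀ x ∈ U, ∀ i j,
            ∑ l, lam x l * pd l (fun q => ghat' q i j) x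
            + ∑ l, pd i (fun q => lam q l) x * ghat' x l j
            + ∑ l, pd j (fun q => lam q l) x * ghat' x l i
            = pd 0 (fun q => g q i j) x) ∧
         (∀ x ∈ U, ∑ j, lam x j * pd j Vhat' x = pd 0 V x) ∧
         (∀ q ∈ {q ∈ Ω | q 0 = 0},
            (∀ i j, ∑ k, ∑ l, ghat' (xof q) k l *
                pd i (fun p => xof p k) q * pd j (fun p => xof p l) q = G0 q i j) ∧
            Vhat' (xof q) = V0 q)) →
        (∀ x ∈ U, ghat' x = ghat x ∧ Vhat' x = Vhat x)) := by
  have hs : IsStraightening 0 lam U Ω y xof :=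
    ⟨hUopen, hΩopen, contDiffOn_pi.2 hy, contDiffOn_pi.2 hxof, himg ▸ mapsTo_image y U,
      fun q hq ↦ (hright q hq).1, hleft, fun q hq ↦ (hright q hq).2, hstraight⟩
  have hΩ : StarConvexAlong 0 Ω := .of_update_mem hIconn hI0 hprod1 hprod2
  let dg : (Fin (n + 1) → ℝ) → Matrix (Fin (n + 1)) (Fin (n + 1)) ℝ :=
    fun x ↦ .of fun i j ↦ pd 0 (fun q ↦ g q i j) x
  have hdgsymm : ∀ x ∈ U, (dg x).IsSymm := fun x hx ↦
    .ext fun i j ↦ pd_congr hUopen (fun p hp ↦ (hgsym p hp).apply i j) hx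
  exact ghat_Vhat_unique_solution_with_initial_data_general (S := dg) hs hΩ
    (fun i j ↦ contDiffOn_pd hUopen (hg i j) 0) hdgsymm (contDiffOn_pd hUopen hV 0)
    hG0 hG0sym hV0
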